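/- arXiv:1905.07574 — 2 statements merged into one kernel-verified Lean document; each statement's English description precedes it below -/
import Mathlib

section
/- The group VP_3 is generated by a_{11}, c_{11}, a_{21}, a_{12}, c_{21}, c_{12}, and the map sending abstract generators to these elements induces an isomorphism onto VP_3 from the group presented by six generators A, C, x_{21}, x_{12}, z_{21}, z_{12} and the relations [x_{21}, x_{12}] = 1, [z_{21}x_{21}^{−1}, z_{12}x_{12}^{−1}] = 1, x_{21}^{C} = x_{21}, z_{21}^{C} = z_{21}, x_{12}^{C} = x_{12}^{z_{12}z_{21}^{−1}}, z_{12}^{C} = z_{12}^{z_{21}^{−1}} (with no relations involving A). -/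
/-!
The formulas `a_{ij}`, `c_{ij}` can be solved for the `λ_{i,j}`: with `A = a_{11}`, `C = c_{11}`,
`X = a_{21}`, `Y = a_{12}`, `Z = c_{21}`, `W = c_{12}`, `P = Z X⁻¹ = b_{21}`, `Q = W Y⁻¹ = b_{12}`,
`λ₁₂ = A`, `λ₂₁ = C A⁻¹`, `λ₁₃ = Y A⁻¹`, `λ₂₃ = A Y⁻¹ X`, `λ₃₁ = A C⁻¹ Q`, `λ₃₂ = P Q⁻¹ C A⁻¹`.
Hence the six elements generate `VP_3` (`closure_eq_top`), and rewriting the six defining relations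
of `VP_3` in them gives
`[X, Y] = 1`, `[P, Q] = 1`, `[C, X] = 1`, `[C, P] = 1`, `C⁻¹ Q C = X Y⁻¹ W X⁻¹` and
`[Y, P Q⁻¹ C] = 1`, in which `A` does not occur.

It remains to see that these are equivalent to the relations of `VGen13.rels`; this is
`rels_b_of_rels_c` and `rels_c_of_rels_b`. Since `C` and `Q` both commute with `P`,
the conjugate `C⁻¹ Q C` commutes with `P = Z X⁻¹`, so that `X Y⁻¹ W X⁻¹` and `Z Y⁻¹ W Z⁻¹` are
interchangeable as its value; the two sets of formulas for conjugation by `C` follow from each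
other. So `toVP` is a homomorphism, surjective by generation, and the formulas for the `λ_{i,j}` define
a homomorphism `ofModel` from `VP_3` that is a left inverse of it.
-/

namespace Paper

/-- Generators `λ_{i,j}`, `1 ≤ i ≠ j ≤ n` (here `0`-indexed: `i j : Fin n`, `i ≠ j`). -/
abbrev VPGen (n : ℕ) := {p : Fin n × Fin n // p.1 ≠ p.2}

/-- The generator `λ_{i,j}` as an element of the free group (junk value `1` if `i = j`). -/
def flam {n : ℕ} (i j : Fin n) : FreeGroup (VPGen n) :=
  if h : i ≠ j then FreeGroup.of ⟨(i, j), h⟩ else 1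

/-- The defining relations of the virtual pure braid group `VP_n`:
`λ_{i,j}λ_{k,l} = λ_{k,l}λ_{i,j}` and `λ_{k,i}λ_{k,j}λ_{i,j} = λ_{i,j}λ_{k,j}λ_{k,i}`,
where distinct letters stand for distinct indices. -/
def VPRels (n : ℕ) : Set (FreeGroup (VPGen n)) :=
  {r | (∃ i j k l : Fin n, i ≠ j ∧ k ≠ l ∧ i ≠ k ∧ i ≠ l ∧ j ≠ k ∧ j ≠ l ∧
          r = flam i j * flam k l * (flam k l * flam i j)⁻¹) ∨
       (∃ i j k : Fin n, i ≠ j ∧ k ≠ i ∧ k ≠ j ∧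
          r = flam k i * flam k j * flam i j * (flam i j * flam k j * flam k i)⁻¹)}

/-- The virtual pure braid group `VP_n`, given by its presentation. -/
abbrev VP (n : ℕ) := PresentedGroup (VPRels n)

/-- The generator `λ_{i,j}` as an element of `VP_n` (junk value `1` if `i = j`). -/
def glam {n : ℕ} (i j : Fin n) : VP n :=
  if h : i ≠ j then PresentedGroup.of ⟨(i, j), h⟩ else 1

/-- Conjugation `a^b = b⁻¹ * a * b`. -/
def cj {G : Type*} [Group G] (a b : G) : G := b⁻¹ * a * b

/-- Commutator `[a, b] = a⁻¹ * b⁻¹ * a * b`. -/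
def cm {G : Type*} [Group G] (a b : G) : G := a⁻¹ * b⁻¹ * a * b

/-- `a_{11} = λ_{1,2}` in `VP_3`. -/
def a11 : VP 3 := glam 0 1
/-- `b_{11} = λ_{2,1}`. -/
def b11 : VP 3 := glam 1 0
/-- `a_{21} = λ_{1,3}λ_{2,3}`. -/
def a21 : VP 3 := glam 0 2 * glam 1 2
/-- `a_{12} = λ_{1,3}λ_{1,2}`. -/
def a12 : VP 3 := glam 0 2 * glam 0 1
/-- `b_{21} = λ_{3,2}λ_{3,1}`. -/
def b21 : VP 3 := glam 2 1 * glam 2 0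
/-- `b_{12} = λ_{2,1}λ_{3,1}`. -/
def b12 : VP 3 := glam 1 0 * glam 2 0
/-- `c_{11} = b_{11}a_{11}`. -/
def c11 : VP 3 := b11 * a11
/-- `c_{21} = b_{21}a_{21}`. -/
def c21 : VP 3 := b21 * a21
/-- `c_{12} = b_{12}a_{12}`. -/
def c12 : VP 3 := b12 * a12

/-- Abstract generators for the presentation of `VP_3` in Corollary 4.3. -/
inductive VGen13
  | A | C | x21 | x12 | z21 | z12
  deriving DecidableEq

namespace VGen13
open FreeGroup
/-- The defining relations of Corollary 4.3: `[x_{21},x_{12}] = 1`,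
`[z_{21}x_{21}⁻¹, z_{12}x_{12}⁻¹] = 1`, `x_{21}^C = x_{21}`, `z_{21}^C = z_{21}`,
`x_{12}^C = x_{12}^{z_{12}z_{21}⁻¹}`, `z_{12}^C = z_{12}^{z_{21}⁻¹}`. -/
def rels : Set (FreeGroup VGen13) :=
  {cm (of x21) (of x12),
   cm (of z21 * (of x21)⁻¹) (of z12 * (of x12)⁻¹),
   cj (of x21) (of C) * (of x21)⁻¹,
   cj (of z21) (of C) * (of z21)⁻¹,
   cj (of x12) (of C) * (cj (of x12) (of z12 * (of z21)⁻¹))⁻¹,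
   cj (of z12) (of C) * (cj (of z12) ((of z21)⁻¹))⁻¹}
end VGen13

/-! ### Equivalence of the two systems of relations -/

section GroupIdentities
variable {G : Type*} [Group G]

/-- Derives the relations in `P = Z X⁻¹`, `Q = W Y⁻¹` from those in `Z`, `W`. The key point:
`C` commutes with `P`, so `R = C⁻¹ Q C` commutes with `P` because `Q` does, which turns the
conjugation by `Z` in `R = Z Y⁻¹ W Z⁻¹` into a conjugation by `X`. -/
lemma rels_b_of_rels_c {C X Y Z W : G} (h1 : X * Y = Y * X)
    (h2 : (Z * X⁻¹) * (W * Y⁻¹) = (W * Y⁻¹) * (Z * X⁻¹))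
    (h3 : C * X = X * C) (h4 : C * Z = Z * C)
    (h5 : C⁻¹ * Y * C = Z * W⁻¹ * Y * W * Z⁻¹) (h6 : C⁻¹ * W * C = Z * W * Z⁻¹) :
    C * (Z * X⁻¹) = Z * X⁻¹ * C ∧
    C⁻¹ * (W * Y⁻¹) * C = X * Y⁻¹ * W * X⁻¹ ∧
    Y * (Z * X⁻¹) * (W * Y⁻¹)⁻¹ * C = (Z * X⁻¹) * (W * Y⁻¹)⁻¹ * C * Y := by
  have hCP : Commute C (Z * X⁻¹) := Commute.mul_right h4 (Commute.inv_right h3)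
  have hR : C⁻¹ * (W * Y⁻¹) * C = Z * Y⁻¹ * W * Z⁻¹ := by
    have : C⁻¹ * (W * Y⁻¹) * C = (C⁻¹ * W * C) * (C⁻¹ * Y * C)⁻¹ := by group
    rw [this, h5, h6]; group
  have hRP : Commute (Z * X⁻¹) (C⁻¹ * (W * Y⁻¹) * C) := by
    have hP : C⁻¹ * (Z * X⁻¹) * C = Z * X⁻¹ := by
      rw [mul_assoc, ← hCP.eq]; group
    have : Commute (C⁻¹ * (Z * X⁻¹) * C) (C⁻¹ * (W * Y⁻¹) * C) := by
      change _ * _ = _ * _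
      calc _ = C⁻¹ * ((Z * X⁻¹) * (W * Y⁻¹)) * C := by group
        _ = C⁻¹ * ((W * Y⁻¹) * (Z * X⁻¹)) * C := by rw [h2]
        _ = _ := by group
    rwa [hP] at this
  refine ⟨hCP.eq, ?_, ?_⟩
  · calc C⁻¹ * (W * Y⁻¹) * C
        = (Z * X⁻¹)⁻¹ * ((Z * X⁻¹) * (C⁻¹ * (W * Y⁻¹) * C)) := by group
      _ = (Z * X⁻¹)⁻¹ * ((C⁻¹ * (W * Y⁻¹) * C) * (Z * X⁻¹)) := by rw [hRP.eq]
      _ = X * Y⁻¹ * W * X⁻¹ := by rw [hR]; group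
  · have hXY : X⁻¹ * Y = Y * X⁻¹ := (Commute.inv_left h1 : Commute X⁻¹ Y).eq
    have hPR : (Z * X⁻¹) * (C⁻¹ * (W * Y⁻¹) * C)⁻¹ = Z * W⁻¹ * Y * X⁻¹ := by
      rw [hRP.inv_right.eq, hR]; group
    have hPC : C⁻¹ * (Z * X⁻¹) = Z * X⁻¹ * C⁻¹ := hCP.inv_left.eq
    have hPQ : (Z * X⁻¹) * (W * Y⁻¹)⁻¹ * C = C * (Z * W⁻¹ * Y * X⁻¹) := by
      calc (Z * X⁻¹) * (W * Y⁻¹)⁻¹ * C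
          = C * (C⁻¹ * (Z * X⁻¹)) * (W * Y⁻¹)⁻¹ * C := by group
        _ = C * ((Z * X⁻¹) * (C⁻¹ * (W * Y⁻¹) * C)⁻¹) := by rw [hPC]; group
        _ = _ := by rw [hPR]
    calc Y * (Z * X⁻¹) * (W * Y⁻¹)⁻¹ * C
        = Y * ((Z * X⁻¹) * (W * Y⁻¹)⁻¹ * C) := by group
      _ = C * (C⁻¹ * Y * C) * (Z * W⁻¹ * Y * X⁻¹) := by rw [hPQ]; group
      _ = C * (Z * W⁻¹ * Y * (Y * X⁻¹)) := by rw [h5]; group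
      _ = C * (Z * W⁻¹ * Y * X⁻¹) * Y := by rw [← hXY]; group
      _ = _ := by rw [← hPQ]

/-- Converse of `rels_b_of_rels_c`, with the same mechanism: `C⁻¹ (W Y⁻¹) C` commutes with
`Z X⁻¹`, which exchanges conjugation by `X` and by `Z`. -/
lemma rels_c_of_rels_b {C X Y Z W : G} (h1 : X * Y = Y * X)
    (h2 : (Z * X⁻¹) * (W * Y⁻¹) = (W * Y⁻¹) * (Z * X⁻¹))
    (h3 : C * X = X * C) (h4 : C * (Z * X⁻¹) = Z * X⁻¹ * C)
    (h5 : C⁻¹ * (W * Y⁻¹) * C = X * Y⁻¹ * W * X⁻¹)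
    (h6 : Y * (Z * X⁻¹) * (W * Y⁻¹)⁻¹ * C = (Z * X⁻¹) * (W * Y⁻¹)⁻¹ * C * Y) :
    C * Z = Z * C ∧
    C⁻¹ * Y * C = Z * W⁻¹ * Y * W * Z⁻¹ ∧ C⁻¹ * W * C = Z * W * Z⁻¹ := by
  have hCP : Commute C (Z * X⁻¹) := h4
  have hCZ : Commute C Z := by
    have := hCP.mul_right (h3 : Commute C X)
    rwa [inv_mul_cancel_right] at this
  have hRP : Commute (Z * X⁻¹) (C⁻¹ * (W * Y⁻¹) * C) := by
    have hP : C⁻¹ * (Z * X⁻¹) * C = Z * X⁻¹ := by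
      rw [mul_assoc, ← hCP.eq]; group
    have : Commute (C⁻¹ * (Z * X⁻¹) * C) (C⁻¹ * (W * Y⁻¹) * C) := by
      change _ * _ = _ * _
      calc _ = C⁻¹ * ((Z * X⁻¹) * (W * Y⁻¹)) * C := by group
        _ = C⁻¹ * ((W * Y⁻¹) * (Z * X⁻¹)) * C := by rw [h2]
        _ = _ := by group
    rwa [hP] at this
  have hR : C⁻¹ * (W * Y⁻¹) * C = Z * Y⁻¹ * W * Z⁻¹ := by
    calc C⁻¹ * (W * Y⁻¹) * C
        = ((C⁻¹ * (W * Y⁻¹) * C) * (Z * X⁻¹)) * (Z * X⁻¹)⁻¹ := by group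
      _ = ((Z * X⁻¹) * (C⁻¹ * (W * Y⁻¹) * C)) * (Z * X⁻¹)⁻¹ := by rw [hRP.eq]
      _ = Z * Y⁻¹ * W * Z⁻¹ := by rw [h5]; group
  have hXY : X⁻¹ * Y = Y * X⁻¹ := (Commute.inv_left h1 : Commute X⁻¹ Y).eq
  have hPR : (Z * X⁻¹) * (C⁻¹ * (W * Y⁻¹) * C)⁻¹ = Z * W⁻¹ * Y * X⁻¹ := by
    rw [hRP.inv_right.eq, hR]; group
  have hPC : C⁻¹ * (Z * X⁻¹) = Z * X⁻¹ * C⁻¹ := hCP.inv_left.eq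
  have hPQ : (Z * X⁻¹) * (W * Y⁻¹)⁻¹ * C = C * (Z * W⁻¹ * Y * X⁻¹) := by
    calc (Z * X⁻¹) * (W * Y⁻¹)⁻¹ * C
        = C * (C⁻¹ * (Z * X⁻¹)) * (W * Y⁻¹)⁻¹ * C := by group
      _ = C * ((Z * X⁻¹) * (C⁻¹ * (W * Y⁻¹) * C)⁻¹) := by rw [hPC]; group
      _ = _ := by rw [hPR]
  have hY : C⁻¹ * Y * C = Z * W⁻¹ * Y * W * Z⁻¹ := by
    have h6' : Y * (C * (Z * W⁻¹ * Y * X⁻¹)) = C * (Z * W⁻¹ * Y * X⁻¹) * Y := by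
      rw [← hPQ, ← h6]; group
    calc C⁻¹ * Y * C
        = C⁻¹ * (Y * (C * (Z * W⁻¹ * Y * X⁻¹))) * (Z * W⁻¹ * Y * X⁻¹)⁻¹ := by group
      _ = Z * W⁻¹ * Y * (X⁻¹ * Y) * X * Y⁻¹ * W * Z⁻¹ := by rw [h6']; group
      _ = Z * W⁻¹ * Y * W * Z⁻¹ := by
        rw [hXY]; group
  refine ⟨hCZ.eq, hY, ?_⟩
  calc C⁻¹ * W * C = (C⁻¹ * (W * Y⁻¹) * C) * (C⁻¹ * Y * C) := by group
    _ = Z * W * Z⁻¹ := by rw [hR, hY]; group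

lemma cm_eq_one {a b : G} (h : a⁻¹ * b⁻¹ * a * b = 1) : a * b = b * a := by
  rw [mul_assoc, ← mul_inv_rev, inv_mul_eq_one] at h
  exact h.symm

lemma conj_eq_self {a c : G} (h : c⁻¹ * a * c = a) : a * c = c * a := by
  rwa [mul_assoc, inv_mul_eq_iff_eq_mul] at h

end GroupIdentities

/-! ### The relations in `VP_3` -/

/-- The mixed relation `λ_{k,i}λ_{k,j}λ_{i,j} = λ_{i,j}λ_{k,j}λ_{k,i}` in `VP_3`. -/
lemma glam_rel {i j k : Fin 3} (hij : i ≠ j) (hki : k ≠ i) (hkj : k ≠ j) :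
    (glam k i * glam k j * glam i j : VP 3) = glam i j * glam k j * glam k i := by
  have h := PresentedGroup.one_of_mem (rels := VPRels 3)
    (x := flam k i * flam k j * flam i j * (flam i j * flam k j * flam k i)⁻¹)
    (Or.inr ⟨i, j, k, hij, hki, hkj, rfl⟩)
  rw [map_mul, map_inv, mul_inv_eq_one] at h
  simpa [flam, glam, hij, hki, hkj, PresentedGroup.of] using h

/-- The elements `C, X, Y, Z, W` of a group satisfy the six relations `VGen13.rels` imposed on
`C, x21, x12, z21, z12`, written with commutators cleared and conjugates expanded. -/
def VGen13.IsModel {G : Type*} [Group G] (C X Y Z W : G) : Prop :=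
  X * Y = Y * X ∧ (Z * X⁻¹) * (W * Y⁻¹) = (W * Y⁻¹) * (Z * X⁻¹) ∧
    C * X = X * C ∧ C * Z = Z * C ∧
    C⁻¹ * Y * C = Z * W⁻¹ * Y * W * Z⁻¹ ∧ C⁻¹ * W * C = Z * W * Z⁻¹

lemma VP3_isModel : VGen13.IsModel c11 a21 a12 c21 c12 := by
  have r123 := glam_rel (k := 0) (i := 1) (j := 2) (by decide) (by decide) (by decide)
  have r132 := glam_rel (k := 0) (i := 2) (j := 1) (by decide) (by decide) (by decide)
  have r213 := glam_rel (k := 1) (i := 0) (j := 2) (by decide) (by decide) (by decide)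
  have r231 := glam_rel (k := 1) (i := 2) (j := 0) (by decide) (by decide) (by decide)
  have r312 := glam_rel (k := 2) (i := 0) (j := 1) (by decide) (by decide) (by decide)
  have r321 := glam_rel (k := 2) (i := 1) (j := 0) (by decide) (by decide) (by decide)
  have e1 : c21 * a21⁻¹ = b21 := by simp [c21]
  have e2 : c12 * a12⁻¹ = b12 := by simp [c12]
  have e3 : c12 = b12 * a12 := rfl
  have h1 : a21 * a12 = a12 * a21 := by
    unfold a21 a12
    simp only [mul_assoc] at *
    rw [r123]
  have h2 : b21 * b12 = b12 * b21 := by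
    unfold b21 b12
    simp only [← mul_assoc] at *
    rw [r321]
  have h3 : c11 * a21 = a21 * c11 := by
    unfold a21 c11 a11 b11
    simp only [mul_assoc] at *
    rw [r123, ← mul_assoc, ← mul_assoc, mul_assoc (glam 1 0), r213]
    simp only [mul_assoc]
  have h4 : c11 * b21 = b21 * c11 := by
    unfold b21 c11 a11 b11
    simp only [mul_assoc] at *
    rw [← r312, ← mul_assoc (glam 2 1), ← mul_assoc (glam 2 1 * _), mul_assoc (glam 2 1), r321]
    simp only [mul_assoc]
  have h5 : c11⁻¹ * b12 * c11 = a21 * a12⁻¹ * c12 * a21⁻¹ := by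
    have hc : a21 * a12⁻¹ = a12⁻¹ * a21 := (Commute.inv_right h1 : Commute a21 a12⁻¹).eq
    have hd : a12⁻¹ * a21 = (glam 0 1)⁻¹ * glam 1 2 := by
      unfold a12 a21; group
    calc c11⁻¹ * b12 * c11
        = (glam 0 1)⁻¹ * (glam 2 0 * glam 1 0 * glam 1 2) * (glam 1 2)⁻¹ * glam 0 1 := by
          unfold c11 b12 a11 b11; group
      _ = ((glam 0 1)⁻¹ * glam 1 2) * b12 * ((glam 0 1)⁻¹ * glam 1 2)⁻¹ := by
          rw [← r231]; unfold b12; group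
      _ = a21 * a12⁻¹ * b12 * (a21 * a12⁻¹)⁻¹ := by rw [← hd, ← hc]
      _ = _ := by rw [e3]; group
  have h6 : a12 * b21 * b12⁻¹ * c11 = b21 * b12⁻¹ * c11 * a12 := by
    have hb : b21 * b12⁻¹ * c11 = glam 2 1 * glam 0 1 := by
      unfold b21 b12 c11 b11 a11; group
    calc a12 * b21 * b12⁻¹ * c11 = a12 * (b21 * b12⁻¹ * c11) := by group
      _ = (glam 0 2 * glam 0 1 * glam 2 1) * glam 0 1 := by rw [hb]; unfold a12; group
      _ = _ := by rw [r132, hb]; unfold a12; group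
  rw [← e1, ← e2] at h2
  rw [← e1] at h4
  rw [← e2] at h5
  rw [← e1, ← e2] at h6
  obtain ⟨q1, q2, q3⟩ := rels_c_of_rels_b h1 h2 h3 h4 h5 h6
  exact ⟨h1, h2, h3, q1, q2, q3⟩

/-! ### Homomorphisms out of `VP_3` -/

/-- The matrix of images of the `λ_{i,j}`: the generators `λ_{i,j}` solved in terms of
`A = λ_{1,2}`, `C = c_{11}`, `X = a_{21}`, `Y = a_{12}`, `Z = c_{21}`, `W = c_{12}`; diagonal
entries are `1`. Here `b_{21} = Z X⁻¹` and `b_{12} = W Y⁻¹`. -/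
def lamMatrix {G : Type*} [Group G] (A C X Y Z W : G) : Fin 3 → Fin 3 → G :=
  ![![1, A, Y * A⁻¹],
    ![C * A⁻¹, 1, A * Y⁻¹ * X],
    ![A * C⁻¹ * (W * Y⁻¹), Z * X⁻¹ * (W * Y⁻¹)⁻¹ * C * A⁻¹, 1]]

lemma lamMatrix_rel {G : Type*} [Group G] (A : G) {C X Y Z W : G}
    (h : VGen13.IsModel C X Y Z W) (i j k : Fin 3) (hij : i ≠ j) (hki : k ≠ i) (hkj : k ≠ j) :
    lamMatrix A C X Y Z W k i * lamMatrix A C X Y Z W k j * lamMatrix A C X Y Z W i j =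
      lamMatrix A C X Y Z W i j * lamMatrix A C X Y Z W k j * lamMatrix A C X Y Z W k i := by
  obtain ⟨h1, h2, h3, h4, h5, h6⟩ := h
  obtain ⟨q1, q2, q3⟩ := rels_b_of_rels_c h1 h2 h3 h4 h5 h6
  fin_cases i <;> fin_cases j <;> fin_cases k <;>
    first | exact absurd rfl hij | exact absurd rfl hki | exact absurd rfl hkj | skip
  · change (A * C⁻¹ * (W * Y⁻¹)) * (Z * X⁻¹ * (W * Y⁻¹)⁻¹ * C * A⁻¹) * A =
      A * (Z * X⁻¹ * (W * Y⁻¹)⁻¹ * C * A⁻¹) * (A * C⁻¹ * (W * Y⁻¹))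
    calc _ = A * C⁻¹ * ((W * Y⁻¹) * (Z * X⁻¹)) * (W * Y⁻¹)⁻¹ * C := by group
      _ = A * C⁻¹ * (Z * X⁻¹ * C) := by rw [← h2]; group
      _ = _ := by rw [← q1]; group
  · change (C * A⁻¹) * (A * Y⁻¹ * X) * (Y * A⁻¹) = (Y * A⁻¹) * (A * Y⁻¹ * X) * (C * A⁻¹)
    calc _ = C * Y⁻¹ * (X * Y) * A⁻¹ := by group
      _ = (C * X) * A⁻¹ := by rw [h1]; group
      _ = _ := by rw [h3]; group
  · change (Z * X⁻¹ * (W * Y⁻¹)⁻¹ * C * A⁻¹) * (A * C⁻¹ * (W * Y⁻¹)) * (C * A⁻¹) =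
      (C * A⁻¹) * (A * C⁻¹ * (W * Y⁻¹)) * (Z * X⁻¹ * (W * Y⁻¹)⁻¹ * C * A⁻¹)
    symm
    calc _ = ((W * Y⁻¹) * (Z * X⁻¹)) * (W * Y⁻¹)⁻¹ * C * A⁻¹ := by group
      _ = _ := by rw [← h2]; group
  · change A * (Y * A⁻¹) * (A * Y⁻¹ * X) = (A * Y⁻¹ * X) * (Y * A⁻¹) * A
    symm
    calc _ = A * Y⁻¹ * (X * Y) := by group
      _ = _ := by rw [h1]; group
  · change (A * Y⁻¹ * X) * (C * A⁻¹) * (A * C⁻¹ * (W * Y⁻¹)) =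
      (A * C⁻¹ * (W * Y⁻¹)) * (C * A⁻¹) * (A * Y⁻¹ * X)
    have hX : X * Y⁻¹ = Y⁻¹ * X := (Commute.inv_right h1 : Commute X Y⁻¹).eq
    symm
    calc _ = A * (C⁻¹ * (W * Y⁻¹) * C) * (Y⁻¹ * X) := by group
      _ = A * (X * Y⁻¹) * W * Y⁻¹ := by rw [q2, ← hX]; group
      _ = _ := by rw [hX]; group
  · change (Y * A⁻¹) * A * (Z * X⁻¹ * (W * Y⁻¹)⁻¹ * C * A⁻¹) =
      (Z * X⁻¹ * (W * Y⁻¹)⁻¹ * C * A⁻¹) * A * (Y * A⁻¹)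
    calc _ = (Y * (Z * X⁻¹) * (W * Y⁻¹)⁻¹ * C) * A⁻¹ := by group
      _ = _ := by rw [q3]; group

/-- The homomorphism from `VP_3` given by elements satisfying the second presentation. -/
def ofModel {G : Type*} [Group G] (A : G) {C X Y Z W : G}
    (h : VGen13.IsModel C X Y Z W) : VP 3 →* G :=
  PresentedGroup.toGroup (f := fun p : VPGen 3 => lamMatrix A C X Y Z W p.1.1 p.1.2) <| by
    rintro r (⟨i, j, k, l, h1, h2, h3, h4, h5, h6, -⟩ | ⟨i, j, k, hij, hki, hkj, rfl⟩)
    · omega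
    · rw [map_mul, map_inv, mul_inv_eq_one]
      simpa [flam, hij, hki, hkj] using lamMatrix_rel A h i j k hij hki hkj

lemma ofModel_glam {G : Type*} [Group G] (A : G) {C X Y Z W : G}
    (h : VGen13.IsModel C X Y Z W) {i j : Fin 3} (hij : i ≠ j) :
    ofModel A h (glam i j) = lamMatrix A C X Y Z W i j := by
  simp [ofModel, glam, hij]

open PresentedGroup in
lemma VGen13.presented_isModel :
    VGen13.IsModel (of C : PresentedGroup VGen13.rels) (of x21) (of x12) (of z21) (of z12) := by
  have key : ∀ u v : FreeGroup VGen13, u * v⁻¹ ∈ VGen13.rels →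
      PresentedGroup.mk VGen13.rels u = PresentedGroup.mk VGen13.rels v := by
    intro u v h
    have := PresentedGroup.one_of_mem h
    rwa [map_mul, map_inv, mul_inv_eq_one] at this
  have k1 := PresentedGroup.one_of_mem (rels := VGen13.rels) (Or.inl rfl)
  have k2 := PresentedGroup.one_of_mem (rels := VGen13.rels) (Or.inr (Or.inl rfl))
  have k3 := key _ _ (Or.inr (Or.inr (Or.inl rfl)))
  have k4 := key _ _ (Or.inr (Or.inr (Or.inr (Or.inl rfl))))
  have k5 := key _ _ (Or.inr (Or.inr (Or.inr (Or.inr (Or.inl rfl)))))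
  have k6 := key _ _ (Or.inr (Or.inr (Or.inr (Or.inr (Or.inr rfl)))))
  simp only [cm, cj, map_mul, map_inv] at k1 k2 k3 k4 k5 k6
  change (of x21)⁻¹ * (of x12)⁻¹ * of x21 * of x12 = 1 at k1
  change (of z21 * (of x21)⁻¹)⁻¹ * (of z12 * (of x12)⁻¹)⁻¹ * (of z21 * (of x21)⁻¹) *
    (of z12 * (of x12)⁻¹) = 1 at k2
  refine ⟨cm_eq_one k1, cm_eq_one k2, (conj_eq_self k3).symm, (conj_eq_self k4).symm,
    k5.trans ?_, k6.trans ?_⟩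
  · change (of z12 * (of z21)⁻¹)⁻¹ * of x12 * (of z12 * (of z21)⁻¹) = _
    group
  · change ((of z21)⁻¹)⁻¹ * of z12 * (of z21)⁻¹ = _
    group

/-! ### Generation and the homomorphism onto `VP_3` -/

lemma closure_eq_top :
    Subgroup.closure {a11, c11, a21, a12, c21, c12} = (⊤ : Subgroup (VP 3)) := by
  set H := Subgroup.closure {a11, c11, a21, a12, c21, c12} with hH
  have m1 : a11 ∈ H := Subgroup.subset_closure (by simp)
  have m2 : c11 ∈ H := Subgroup.subset_closure (by simp)
  have m3 : a21 ∈ H := Subgroup.subset_closure (by simp)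
  have m4 : a12 ∈ H := Subgroup.subset_closure (by simp)
  have m5 : c21 ∈ H := Subgroup.subset_closure (by simp)
  have m6 : c12 ∈ H := Subgroup.subset_closure (by simp)
  have l12 : glam 0 1 ∈ H := m1
  have l21 : glam 1 0 ∈ H := (H.mul_mem_cancel_right m1).1 m2
  have l13 : glam 0 2 ∈ H := (H.mul_mem_cancel_right l12).1 m4
  have l23 : glam 1 2 ∈ H := (H.mul_mem_cancel_left l13).1 m3
  have l31 : glam 2 0 ∈ H := (H.mul_mem_cancel_left l21).1 ((H.mul_mem_cancel_right m4).1 m6)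
  have l32 : glam 2 1 ∈ H := (H.mul_mem_cancel_right l31).1 ((H.mul_mem_cancel_right m3).1 m5)
  rw [eq_top_iff, ← PresentedGroup.closure_range_of, Subgroup.closure_le]
  rintro _ ⟨⟨⟨i, j⟩, hij⟩, rfl⟩
  have e : PresentedGroup.of ⟨(i, j), hij⟩ = (glam i j : VP 3) := by
    rw [glam, dif_pos hij]
  rw [e]
  fin_cases i <;> fin_cases j <;> first | exact absurd rfl hij | assumption

/-- The homomorphism from the second presentation to `VP_3`. -/
def toVP : PresentedGroup VGen13.rels →* VP 3 :=
  PresentedGroup.toGroup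
    (f := fun g => match g with
      | .A => a11 | .C => c11 | .x21 => a21 | .x12 => a12 | .z21 => c21 | .z12 => c12) <| by
    obtain ⟨h1, h2, h3, h4, h5, h6⟩ := VP3_isModel
    intro r hr
    simp only [VGen13.rels, Set.mem_insert_iff, Set.mem_singleton_iff] at hr
    rcases hr with rfl | rfl | rfl | rfl | rfl | rfl <;>
      simp only [cm, cj, map_mul, map_inv, FreeGroup.lift_apply_of]
    · rw [mul_assoc, ← mul_inv_rev, ← h1, inv_mul_cancel]
    · rw [mul_assoc, ← mul_inv_rev, ← h2, inv_mul_cancel]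
    · rw [mul_assoc c11⁻¹, ← h3]; group
    · rw [mul_assoc c11⁻¹, ← h4]; group
    · rw [h5]; group
    · rw [h6]; group

/-- Corollary 4.3: `VP_3` is generated by `a_{11}, c_{11}, a_{21}, a_{12}, c_{21}, c_{12}`,
and the map sending the abstract generators to these elements induces an isomorphism from
the group presented by six generators and the relations `[x_{21},x_{12}] = 1`,
`[c_{21}a_{21}⁻¹, c_{12}a_{12}⁻¹] = 1`, `x_{21}^{c_{11}} = x_{21}`, `c_{21}^{c_{11}} = c_{21}`,
`x_{12}^{c_{11}} = x_{12}^{c_{12}c_{21}⁻¹}`, `c_{12}^{c_{11}} = c_{12}^{c_{21}⁻¹}` onto `VP_3`. -/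
theorem statement13 :
    Subgroup.closure {a11, c11, a21, a12, c21, c12} = (⊤ : Subgroup (VP 3)) ∧
    ∃ f : PresentedGroup VGen13.rels →* VP 3,
      f (PresentedGroup.of VGen13.A) = a11 ∧
      f (PresentedGroup.of VGen13.C) = c11 ∧
      f (PresentedGroup.of VGen13.x21) = a21 ∧
      f (PresentedGroup.of VGen13.x12) = a12 ∧
      f (PresentedGroup.of VGen13.z21) = c21 ∧
      f (PresentedGroup.of VGen13.z12) = c12 ∧
      Function.Bijective f := by
  refine ⟨closure_eq_top, toVP, ?_, ?_, ?_, ?_, ?_, ?_, ?_, ?_⟩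
  iterate 6 exact PresentedGroup.toGroup.of _
  · let g := ofModel (PresentedGroup.of VGen13.A) VGen13.presented_isModel
    have hg : g.comp toVP = MonoidHom.id _ := by
      apply PresentedGroup.ext
      intro x
      have e (i j : Fin 3) (hij : i ≠ j) := ofModel_glam (PresentedGroup.of VGen13.A)
        VGen13.presented_isModel hij
      have e01 := e 0 1 (by decide)
      have e02 := e 0 2 (by decide)
      have e10 := e 1 0 (by decide)
      have e12 := e 1 2 (by decide)
      have e20 := e 2 0 (by decide)
      have e21 := e 2 1 (by decide)
      cases x <;>
      simp [g, toVP, a11, c11, b11, a21, a12, c21, c12, b21, b12, e01, e02, e10, e12, e20, e21,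
        lamMatrix, mul_assoc]
    exact Function.LeftInverse.injective (g := g) fun x => DFunLike.congr_fun hg x
  · rw [← MonoidHom.range_eq_top, eq_top_iff, ← closure_eq_top, Subgroup.closure_le]
    rintro _ (rfl | rfl | rfl | rfl | rfl | rfl)
    exacts [⟨.of .A, PresentedGroup.toGroup.of _⟩, ⟨.of .C, PresentedGroup.toGroup.of _⟩,
      ⟨.of .x21, PresentedGroup.toGroup.of _⟩, ⟨.of .x12, PresentedGroup.toGroup.of _⟩,
      ⟨.of .z21, PresentedGroup.toGroup.of _⟩, ⟨.of .z12, PresentedGroup.toGroup.of _⟩]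

end Paper
end

section
/- The subgroup T_2 = ⟨a_{21}, a_{12}, b_{21}, b_{12}⟩ of VP_3 has the following presentation: the map sending abstract generators x_{21}, x_{12}, y_{21}, y_{12} to a_{21}, a_{12}, b_{21}, b_{12} induces an isomorphism onto T_2 from the group presented by these four generators and the relations, for all k ∈ ℤ, [x_{21}^{z_{21}^k}, x_{12}^{z_{12}^k}] = 1 and [y_{21}^{z_{21}^k}, y_{12}^{z_{12}^k}] = 1, where z_{21} = y_{21}x_{21} and z_{12} = y_{12}x_{12} (corresponding to c_{21} = b_{21}a_{21} and c_{12} = b_{12}a_{12}). -/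
/-!
Put `A = λ₁₂`, `c = c₁₁ = λ₂₁λ₁₂`. Solving for the generators in terms of `A`, `c` and
`q = a₂₁`, `p = a₁₂`, `s = b₂₁`, `r = b₁₂`, the six relations of `VP₃` become: `p, q` commute,
`r, s` commute, `c` commutes with `q` and `s`, and two relations describing the conjugates of
`p` and `r` by `c`. Modulo the others, the last two say that `t = c * s * q` acts by conjugation
on `q, s` as `c₂₁ = s * q` does, and on `p, r` as `c₁₂ = r * p` does. In particular `VP₃` is
the free product of `⟨A⟩` and an extension of `T₂` by `⟨t⟩`.

* The relations of the presentation hold in `VP₃`, as the `k`-th one is the conjugate by `t ^ k`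
  of `[q, p] = 1` or of `[s, r] = 1` (`twist_of_rels`, `cj_zpow`).
* In the presented group `P`, conjugating `x₂₁, y₂₁` by `z₂₁ ^ e` and `x₁₂, y₁₂` by `z₁₂ ^ e`
  permutes the relations, so it is an automorphism `shift e` of `P`. Sending `A` to `1` and `t` to the inverse of
  this automorphism (`e = 1`) defines a homomorphism from `VP₃` to the holomorph
  `P ⋊ MulAut P` (`rels_of_twist`) whose composite with `P → VP₃` is the canonical embedding
  of `P`. Hence `P → VP₃` is injective.
-/

namespace Paper

/-- Abstract generators for the presentation of `T_2 ≤ VP_3`. -/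
inductive TGen2
  | x21 | x12 | y21 | y12
  deriving DecidableEq

namespace TGen2
open FreeGroup
/-- `z_{21} = y_{21}x_{21}` (corresponding to `c_{21} = b_{21}a_{21}`). -/
def z21 : FreeGroup TGen2 := of y21 * of x21
/-- `z_{12} = y_{12}x_{12}` (corresponding to `c_{12} = b_{12}a_{12}`). -/
def z12 : FreeGroup TGen2 := of y12 * of x12
/-- The defining relations of Proposition 4.6:
`[x_{21}^{z_{21}^k}, x_{12}^{z_{12}^k}] = [y_{21}^{z_{21}^k}, y_{12}^{z_{12}^k}] = 1`, `k ∈ ℤ`. -/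
def rels : Set (FreeGroup TGen2) :=
  {r | ∃ k : ℤ, r = cm (cj (of x21) (z21 ^ k)) (cj (of x12) (z12 ^ k)) ∨
                r = cm (cj (of y21) (z21 ^ k)) (cj (of y12) (z12 ^ k))}
end TGen2


/-! ### Conjugation and commutators -/

section Conj
variable {G : Type*} [Group G]

lemma cm_eq_one_s15 {a b : G} : cm a b = 1 ↔ Commute a b := by
  rw [cm, mul_assoc, mul_assoc, inv_mul_eq_one, eq_inv_mul_iff_mul_eq]
  exact eq_comm

lemma cj_mul (a b g : G) : cj (a * b) g = cj a g * cj b g := by simp [cj, mul_assoc]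

lemma cj_cj (a g h : G) : cj (cj a g) h = cj a (g * h) := by simp [cj, mul_assoc]

lemma cj_self_zpow (g : G) (e : ℤ) : cj g (g ^ e) = g := by
  rw [cj, mul_assoc, (Commute.zpow_right (Commute.refl g) e).eq, inv_mul_cancel_left]

lemma commute_cj {a b : G} (h : Commute a b) (g : G) : Commute (cj a g) (cj b g) := by
  rw [commute_iff_eq, ← cj_mul, ← cj_mul, h.eq]

lemma map_cj {H : Type*} [Group H] (f : G →* H) (a g : G) : f (cj a g) = cj (f a) (f g) := by
  simp [cj]

lemma map_cm {H : Type*} [Group H] (f : G →* H) (a b : G) : f (cm a b) = cm (f a) (f b) := by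
  simp [cm]

/-- If `t` and `y * x` act in the same way on `x` and `y`, so do their powers. -/
lemma cj_zpow {x y t : G} (hx : cj x t = cj x (y * x)) (hy : cj y t = cj y (y * x)) (k : ℤ) :
    cj x (t ^ k) = cj x ((y * x) ^ k) ∧ cj y (t ^ k) = cj y ((y * x) ^ k) := by
  have key : ∀ w, cj w t = cj w (y * x) → Commute (t * (y * x)⁻¹) w := by
    intro w hw
    have : w * t = t * cj w (y * x) := by rw [← hw]; simp [cj, mul_assoc]
    rw [commute_iff_eq, ← mul_assoc, this]
    simp [cj, mul_assoc]
  have hux := key x hx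
  have huy := key y hy
  have huz : Commute (t * (y * x)⁻¹) (y * x) := huy.mul_right hux
  have ht : t ^ k = (t * (y * x)⁻¹) ^ k * (y * x) ^ k := by
    rw [← huz.mul_zpow, inv_mul_cancel_right]
  have fin : ∀ w, Commute (t * (y * x)⁻¹) w → cj w (t ^ k) = cj w ((y * x) ^ k) := by
    intro w hw
    rw [ht, ← cj_cj]
    congr 1
    rw [cj, mul_assoc, ← (hw.zpow_left k).eq, inv_mul_cancel_left]
  exact ⟨fin x hux, fin y huy⟩

/-- The relations of `VP₃`, written in terms of `c = c₁₁`, `p = a₁₂`, `q = a₂₁`, `r = b₁₂` and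
`s = b₂₁`, imply that `c * s * q` acts on `r` and `p`
as `r * p` does. -/
lemma twist_of_rels {p q r s c : G} (hpq : Commute p q) (hrs : Commute r s) (hcs : Commute c s)
    (h1 : c * p⁻¹ * q * r = r * c * p⁻¹ * q) (h2 : p * s * r⁻¹ * c = s * r⁻¹ * c * p) :
    cj r (c * s * q) = cj r (r * p) ∧ cj p (c * s * q) = cj p (r * p) := by
  have hR : cj r c = q * p⁻¹ * r * p * q⁻¹ := by
    have e : cj r c = c⁻¹ * (r * c * p⁻¹ * q) * (q⁻¹ * p) := by simp [cj, mul_assoc]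
    have e2 : p⁻¹ * q = q * p⁻¹ := hpq.inv_left.eq
    have e3 : q⁻¹ * p = p * q⁻¹ := hpq.symm.inv_left.eq
    rw [e, ← h1, e3]
    calc _ = (p⁻¹ * q) * r * p * q⁻¹ := by group
      _ = _ := by rw [e2]
  have hRs : Commute (cj r c) s := by
    have := commute_cj hrs c
    rwa [show cj s c = s by rw [cj, mul_assoc, ← hcs.eq, inv_mul_cancel_left]] at this
  have hRs' : cj (cj r c) s = cj r c := by
    rw [cj, mul_assoc, hRs.eq, inv_mul_cancel_left]
  have hp : cj (cj p c) s = (cj r c)⁻¹ * p * cj r c := by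
    have hg : s * r⁻¹ * c = c * s * (cj r c)⁻¹ := by
      rw [← hcs.eq.symm]
      simp [cj, mul_assoc]
    have h3 : p * (c * s * (cj r c)⁻¹) = c * s * (cj r c)⁻¹ * p := by
      rw [← hg, ← h2]; simp only [mul_assoc]
    calc cj (cj p c) s = (c * s)⁻¹ * (p * (c * s * (cj r c)⁻¹)) * cj r c := by
          simp only [cj]; group
      _ = _ := by rw [h3]; group
  refine ⟨?_, ?_⟩
  · rw [← cj_cj, ← cj_cj, hRs', hR]
    simp [cj, mul_assoc]
  · have e3 : q⁻¹ * p * q = p := by rw [mul_assoc, hpq.eq, inv_mul_cancel_left]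
    rw [← cj_cj, ← cj_cj, hp, hR]
    calc _ = p⁻¹ * r⁻¹ * p * (q⁻¹ * p * q) * p⁻¹ * r * p := by simp only [cj]; group
      _ = _ := by rw [e3]; simp [cj, mul_assoc]

/-- Converse of `twist_of_rels`. -/
lemma rels_of_twist {p q r s c : G} (hpq : Commute p q) (hrs : Commute r s)
    (hcs : Commute c s)
    (hr : cj r (c * s * q) = cj r (r * p)) (hp : cj p (c * s * q) = cj p (r * p)) :
    c * p⁻¹ * q * r = r * c * p⁻¹ * q ∧ p * s * r⁻¹ * c = s * r⁻¹ * c * p := by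
  have hRs : Commute (cj r c) s := by
    have := commute_cj hrs c
    rwa [show cj s c = s by rw [cj, mul_assoc, ← hcs.eq, inv_mul_cancel_left]] at this
  have hRs' : cj (cj r c) s = cj r c := by
    rw [cj, mul_assoc, hRs.eq, inv_mul_cancel_left]
  have hR : cj r c = q * (p⁻¹ * r * p) * q⁻¹ := by
    rw [← cj_cj, ← cj_cj, hRs'] at hr
    calc cj r c = q * cj (cj r c) q * q⁻¹ := by simp only [cj]; group
      _ = _ := by rw [hr]; simp only [cj]; group
  have e2 : q * p⁻¹ = p⁻¹ * q := hpq.inv_left.eq.symm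
  have hrc : r * c = c * cj r c := by simp [cj, mul_assoc]
  refine ⟨?_, ?_⟩
  · have e3 : p * q⁻¹ * p⁻¹ * q = 1 := by rw [mul_assoc, ← e2]; group
    rw [hrc, hR]
    calc _ = c * (p⁻¹ * q) * r := by group
      _ = c * (q * p⁻¹) * r * 1 := by rw [e2, mul_one]
      _ = _ := by rw [← e3]; group
  · have hg : s * r⁻¹ * c = c * s * (cj r c)⁻¹ := by
      rw [← hcs.eq.symm]
      simp [cj, mul_assoc]
    have hp' : cj p (c * s) = q * (p⁻¹ * r⁻¹ * p * r * p) * q⁻¹ := by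
      calc cj p (c * s) = q * cj p (c * s * q) * q⁻¹ := by simp only [cj]; group
        _ = _ := by rw [hp]; simp only [cj]; group
    have e4 : q⁻¹ * p * q = p := by rw [mul_assoc, hpq.eq, inv_mul_cancel_left]
    have hp2 : cj p (c * s) = (cj r c)⁻¹ * p * cj r c := by
      rw [hp', hR]
      calc _ = q * p⁻¹ * r⁻¹ * p * p * p⁻¹ * r * p * q⁻¹ := by group
        _ = q * p⁻¹ * r⁻¹ * p * (q⁻¹ * p * q) * p⁻¹ * r * p * q⁻¹ := by rw [e4]
        _ = _ := by group
    have hx : p * (c * s) = c * s * cj p (c * s) := by simp only [cj]; group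
    calc _ = p * (s * r⁻¹ * c) := by group
      _ = p * (c * s) * (cj r c)⁻¹ := by rw [hg]; group
      _ = _ := by rw [hg, hx, hp2]; group

end Conj

/-! ### The virtual pure braid group on three strands -/

/-- The six relations `m k i * m k j * m i j = m i j * m k j * m k i` for a family `m`. -/
def Braided {K : Type*} [Group K] (m : Fin 3 → Fin 3 → K) : Prop :=
  ∀ i j k : Fin 3, i ≠ j → k ≠ i → k ≠ j → m k i * m k j * m i j = m i j * m k j * m k i

lemma braided_glam : Braided (fun i j => (glam i j : VP 3)) := by
  have e : ∀ i j : Fin 3, (glam i j : VP 3) = PresentedGroup.mk (VPRels 3) (flam i j) := by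
    intro i j
    unfold glam flam
    split_ifs
    · rfl
    · exact (map_one _).symm
  intro i j k h1 h2 h3
  have : flam k i * flam k j * flam i j * (flam i j * flam k j * flam k i)⁻¹ ∈ VPRels 3 :=
    Or.inr ⟨i, j, k, h1, h2, h3, rfl⟩
  have h := PresentedGroup.one_of_mem this
  rw [map_mul, map_inv, mul_inv_eq_one, map_mul, map_mul, map_mul, map_mul] at h
  simpa only [e] using h

lemma exists_VP_hom {K : Type*} [Group K] (m : Fin 3 → Fin 3 → K) (hm : Braided m) :
    ∃ g : VP 3 →* K, ∀ i j, i ≠ j → g (glam i j) = m i j := by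
  have hl : ∀ i j : Fin 3, i ≠ j →
      FreeGroup.lift (fun x : VPGen 3 => m x.1.1 x.1.2) (flam i j) = m i j := by
    intro i j h
    simp [flam, h]
  have hrel : ∀ r ∈ VPRels 3, FreeGroup.lift (fun x : VPGen 3 => m x.1.1 x.1.2) r = 1 := by
    rintro r (⟨i, j, k, l, h1, h2, h3, h4, h5, h6, -⟩ | ⟨i, j, k, h1, h2, h3, rfl⟩)
    · omega
    · simp only [map_mul, map_inv, hl _ _ h1, hl _ _ h2, hl _ _ h3]
      rw [hm i j k h1 h2 h3, mul_inv_cancel]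
  refine ⟨PresentedGroup.toGroup hrel, fun i j h => ?_⟩
  simp [glam, h]

/-- In `VP₃`, the element `c₁₁ * c₂₁` acts by conjugation on `a₂₁, b₂₁` as `c₂₁` does, and on
`a₁₂, b₁₂` as `c₁₂` does. -/
lemma VP_twist : Commute a12 a21 ∧ Commute b12 b21 ∧
    (cj a21 (c11 * b21 * a21) = cj a21 (b21 * a21) ∧
      cj b21 (c11 * b21 * a21) = cj b21 (b21 * a21)) ∧
    (cj a12 (c11 * b21 * a21) = cj a12 (b12 * a12) ∧
      cj b12 (c11 * b21 * a21) = cj b12 (b12 * a12)) := by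
  have h123 := braided_glam 1 2 0 (by decide) (by decide) (by decide)
  have h132 := braided_glam 2 1 0 (by decide) (by decide) (by decide)
  have h213 := braided_glam 0 2 1 (by decide) (by decide) (by decide)
  have h231 := braided_glam 2 0 1 (by decide) (by decide) (by decide)
  have h312 := braided_glam 0 1 2 (by decide) (by decide) (by decide)
  have h321 := braided_glam 1 0 2 (by decide) (by decide) (by decide)
  beta_reduce at h123 h132 h213 h231 h312 h321
  have hpq : Commute a12 a21 := by
    rw [commute_iff_eq, a12, a21]
    calc _ = glam 0 2 * (glam 0 1 * glam 0 2 * glam 1 2) := by simp only [mul_assoc]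
      _ = _ := by rw [h123]; simp only [mul_assoc]
  have hrs : Commute b12 b21 := by
    rw [commute_iff_eq, b12, b21]
    calc _ = (glam 1 0 * glam 2 0 * glam 2 1) * glam 2 0 := by simp only [mul_assoc]
      _ = _ := by rw [← h321]; simp only [mul_assoc]
  have hcq : Commute c11 a21 := by
    rw [commute_iff_eq, c11, a11, b11, a21]
    calc _ = glam 1 0 * (glam 0 1 * glam 0 2 * glam 1 2) := by simp only [mul_assoc]
      _ = (glam 1 0 * glam 1 2 * glam 0 2) * glam 0 1 := by rw [h123]; simp only [mul_assoc]
      _ = _ := by rw [h213]; simp only [mul_assoc]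
  have hcs : Commute c11 b21 := by
    rw [commute_iff_eq, c11, a11, b11, b21]
    calc _ = glam 1 0 * (glam 0 1 * glam 2 1 * glam 2 0) := by simp only [mul_assoc]
      _ = (glam 1 0 * glam 2 0 * glam 2 1) * glam 0 1 := by rw [← h312]; simp only [mul_assoc]
      _ = _ := by rw [← h321]; simp only [mul_assoc]
  have h1 : c11 * a12⁻¹ * a21 * b12 = b12 * c11 * a12⁻¹ * a21 := by
    rw [c11, a11, b11, a21, a12, b12]
    calc _ = glam 1 0 * (glam 1 2 * glam 1 0 * glam 2 0) := by group
      _ = _ := by rw [h231]; group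
  have h2 : a12 * b21 * b12⁻¹ * c11 = b21 * b12⁻¹ * c11 * a12 := by
    rw [c11, a11, b11, b21, a12, b12]
    calc _ = (glam 0 2 * glam 0 1 * glam 2 1) * glam 0 1 := by group
      _ = _ := by rw [h132]; group
  obtain ⟨hr, hp⟩ := twist_of_rels hpq hrs hcs h1 h2
  have fix : ∀ w, Commute c11 w → cj w (c11 * b21 * a21) = cj w (b21 * a21) := by
    intro w hw
    have e : cj w c11 = w := by rw [cj, mul_assoc, ← hw.eq, inv_mul_cancel_left]
    rw [mul_assoc, ← cj_cj, e]
  exact ⟨hpq, hrs, ⟨fix _ hcq, fix _ hcs⟩, hp, hr⟩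

/-- A homomorphism from `VP₃` killing `λ₁₂`, defined by the images `p, q, r, s` of
`a₁₂, a₂₁, b₁₂, b₂₁` and the image `t` of `c₁₁ * c₂₁`. -/
lemma exists_VP_hom_of_twist {K : Type*} [Group K] {p q r s t : K}
    (hpq : Commute p q) (hrs : Commute r s)
    (hq : cj q t = cj q (s * q)) (hs : cj s t = cj s (s * q))
    (hp : cj p t = cj p (r * p)) (hr : cj r t = cj r (r * p)) :
    ∃ g : VP 3 →* K, g a12 = p ∧ g a21 = q ∧ g b12 = r ∧ g b21 = s := by
  obtain ⟨c, hc⟩ : ∃ c, t = c * s * q := ⟨t * q⁻¹ * s⁻¹, by group⟩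
  have fix : ∀ w, cj w t = cj w (s * q) → Commute c w := by
    intro w hw
    have e : ∀ g, w = g * cj w g * g⁻¹ := fun g => by simp only [cj]; group
    have e2 : w * (c * s * q) = c * s * q * cj w (s * q) := by
      rw [← hw, hc]; simp only [cj]; group
    calc c * w = c * (s * q * cj w (s * q) * (s * q)⁻¹) := by rw [← e]
      _ = (c * s * q * cj w (s * q)) * (s * q)⁻¹ := by group
      _ = w * c := by rw [← e2]; group
  have hcq := fix q hq
  have hcs := fix s hs
  rw [hc] at hp hr
  obtain ⟨h1, h2⟩ := rels_of_twist hpq hrs hcs hr hp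
  -- The values of the generators obtained by solving for them with `λ₁₂ = 1`.
  let m : Fin 3 → Fin 3 → K := ![![1, 1, p], ![c, 1, p⁻¹ * q], ![c⁻¹ * r, s * r⁻¹ * c, 1]]
  have h3 : c * (p⁻¹ * q * p) = q * c := by rw [mul_assoc, ← hpq.eq, inv_mul_cancel_left, hcq.eq]
  have h4 : r * s * r⁻¹ = s := by rw [hrs.eq, mul_inv_cancel_right]
  have hm : Braided m := by
    intro i j k hij hki hkj
    fin_cases i <;> fin_cases j <;> fin_cases k <;> simp [m] at hij hki hkj ⊢
    · calc _ = c⁻¹ * (r * s * r⁻¹) * c := by group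
        _ = s := by rw [h4, mul_assoc, ← hcs.eq, inv_mul_cancel_left]
    · rw [← h3]; group
    · calc _ = (r * s * r⁻¹) * c := by rw [h4]
        _ = _ := by group
    · rw [mul_assoc, ← hpq.eq, inv_mul_cancel_left]
    · calc _ = c⁻¹ * (c * p⁻¹ * q * r) := by group
        _ = _ := by rw [h1]; group
    · calc _ = p * s * r⁻¹ * c := by group
        _ = _ := h2
  obtain ⟨g, hg⟩ := exists_VP_hom m hm
  refine ⟨g, ?_, ?_, ?_, ?_⟩ <;>
    simp [a12, a21, b12, b21, hg, m, mul_assoc]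

/-! ### The presented group and its automorphism -/

open TGen2

lemma lift_rels {K : Type*} [Group K] (v : TGen2 → K)
    (hx : ∀ k : ℤ, Commute (cj (v x21) ((v y21 * v x21) ^ k)) (cj (v x12) ((v y12 * v x12) ^ k)))
    (hy : ∀ k : ℤ, Commute (cj (v y21) ((v y21 * v x21) ^ k)) (cj (v y12) ((v y12 * v x12) ^ k))) :
    ∀ r ∈ TGen2.rels, FreeGroup.lift v r = 1 := by
  rintro r ⟨k, rfl | rfl⟩
  · simpa [map_cm, map_cj, z21, z12, cm_eq_one_s15] using hx k
  · simpa [map_cm, map_cj, z21, z12, cm_eq_one_s15] using hy k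

/-- The abstract group presented by `TGen2.rels`. -/
abbrev P := PresentedGroup TGen2.rels

/-- The generators of `P`. -/
abbrev gen (a : TGen2) : P := PresentedGroup.of a

lemma P_rel_x (k : ℤ) :
    Commute (cj (gen x21) ((gen y21 * gen x21) ^ k)) (cj (gen x12) ((gen y12 * gen x12) ^ k)) := by
  have h := PresentedGroup.one_of_mem (rels := TGen2.rels) ⟨k, Or.inl rfl⟩
  simp only [map_cm, map_cj, z21, z12, cm_eq_one_s15, map_zpow, map_mul] at h
  exact h

lemma P_rel_y (k : ℤ) :
    Commute (cj (gen y21) ((gen y21 * gen x21) ^ k)) (cj (gen y12) ((gen y12 * gen x12) ^ k)) := by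
  have h := PresentedGroup.one_of_mem (rels := TGen2.rels) ⟨k, Or.inr rfl⟩
  simp only [map_cm, map_cj, z21, z12, cm_eq_one_s15, map_zpow, map_mul] at h
  exact h

/-- The element `z₂₁` or `z₁₂` of `P` attached to each generator. -/
def zz : TGen2 → P
  | x21 => gen y21 * gen x21
  | y21 => gen y21 * gen x21
  | x12 => gen y12 * gen x12
  | y12 => gen y12 * gen x12

/-- The images of the generators of `P` under `shift e`. -/
def shiftGen (e : ℤ) (a : TGen2) : P := cj (gen a) (zz a ^ e)

lemma shiftGen_21 (e : ℤ) : shiftGen e y21 * shiftGen e x21 = gen y21 * gen x21 := by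
  simp only [shiftGen, zz, ← cj_mul, cj_self_zpow]

lemma shiftGen_12 (e : ℤ) : shiftGen e y12 * shiftGen e x12 = gen y12 * gen x12 := by
  simp only [shiftGen, zz, ← cj_mul, cj_self_zpow]

/-- The endomorphism of `P` conjugating `x₂₁, y₂₁` by `z₂₁ ^ e` and `x₁₂, y₁₂` by `z₁₂ ^ e`. It
exists because it carries the `k`-th relations to the `(e + k)`-th ones. -/
def shift (e : ℤ) : P →* P :=
  PresentedGroup.toGroup (f := shiftGen e) <| lift_rels _
    (fun k => by
      rw [shiftGen_21, shiftGen_12]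
      simpa only [shiftGen, zz, cj_cj, ← zpow_add] using P_rel_x (e + k))
    (fun k => by
      rw [shiftGen_21, shiftGen_12]
      simpa only [shiftGen, zz, cj_cj, ← zpow_add] using P_rel_y (e + k))

lemma shift_gen (e : ℤ) (a : TGen2) : shift e (gen a) = shiftGen e a :=
  PresentedGroup.toGroup.of _

lemma shift_zz (e : ℤ) (a : TGen2) : shift e (zz a) = zz a := by
  cases a <;> simp only [zz, map_mul, shift_gen, shiftGen_21, shiftGen_12]

lemma shift_comp (d e : ℤ) : (shift d).comp (shift e) = shift (d + e) := by
  refine PresentedGroup.ext fun a => ?_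
  change shift d (shift e (gen a)) = shift (d + e) (gen a)
  rw [shift_gen, shift_gen, shiftGen, map_cj, map_zpow, shift_zz, shift_gen, shiftGen, cj_cj,
    ← zpow_add, shiftGen]

lemma shift_zero : shift 0 = MonoidHom.id P := by
  refine PresentedGroup.ext fun a => ?_
  change shift 0 (gen a) = gen a
  rw [shift_gen, shiftGen]
  simp [cj]

/-- `shift 1` as an automorphism. -/
def shiftAut : MulAut P :=
  MonoidHom.toMulEquiv (shift 1) (shift (-1)) (by rw [shift_comp, ← shift_zero]; rfl)
    (by rw [shift_comp, ← shift_zero]; rfl)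

lemma shiftAut_gen (a : TGen2) : shiftAut (gen a) = cj (gen a) (zz a) := by
  change shift 1 (gen a) = _
  rw [shift_gen, shiftGen, zpow_one]

/-- A homomorphism from `VP₃` to the holomorph of `P` which undoes the map `P → VP₃` on
generators. -/
lemma exists_retraction : ∃ g : VP 3 →* P ⋊[MonoidHom.id (MulAut P)] MulAut P,
    g a12 = SemidirectProduct.inl (gen x12) ∧ g a21 = SemidirectProduct.inl (gen x21) ∧
    g b12 = SemidirectProduct.inl (gen y12) ∧ g b21 = SemidirectProduct.inl (gen y21) := by
  have key : ∀ a : TGen2, cj (SemidirectProduct.inl (gen a) :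
      P ⋊[MonoidHom.id (MulAut P)] MulAut P) (SemidirectProduct.inr shiftAut⁻¹) =
      cj (SemidirectProduct.inl (gen a)) (SemidirectProduct.inl (zz a)) := by
    intro a
    rw [← map_cj, ← shiftAut_gen]
    have h := SemidirectProduct.inl_aut (φ := MonoidHom.id (MulAut P)) shiftAut (gen a)
    rw [MonoidHom.id_apply] at h
    rw [h, cj, map_inv, inv_inv]
  have hx := P_rel_x 0
  have hy := P_rel_y 0
  simp only [zpow_zero, cj, inv_one, one_mul, mul_one] at hx hy
  refine exists_VP_hom_of_twist (t := SemidirectProduct.inr shiftAut⁻¹)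
    (hx.symm.map _) (hy.symm.map _) ?_ ?_ ?_ ?_ <;>
    rw [← map_mul] <;> exact key _

/-- Proposition 4.6: the subgroup `T_2 = ⟨a_{21}, a_{12}, b_{21}, b_{12}⟩` of `VP_3` is
presented by the generators `a_{21}, a_{12}, b_{21}, b_{12}` and the relations
`[a_{21}^{c_{21}^k}, a_{12}^{c_{12}^k}] = [b_{21}^{c_{21}^k}, b_{12}^{c_{12}^k}] = 1`, `k ∈ ℤ`. -/
theorem statement15 :
    ∃ f : PresentedGroup TGen2.rels →* VP 3,
      f (PresentedGroup.of TGen2.x21) = a21 ∧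
      f (PresentedGroup.of TGen2.x12) = a12 ∧
      f (PresentedGroup.of TGen2.y21) = b21 ∧
      f (PresentedGroup.of TGen2.y12) = b12 ∧
      Function.Injective f ∧
      f.range = Subgroup.closure {a21, a12, b21, b12} := by
  obtain ⟨hpq, hrs, ⟨hq, hs⟩, hp, hr⟩ := VP_twist
  let v : TGen2 → VP 3
    | x21 => a21
    | x12 => a12
    | y21 => b21
    | y12 => b12
  have hv : ∀ r ∈ TGen2.rels, FreeGroup.lift v r = 1 := by
    refine lift_rels v (fun k => ?_) (fun k => ?_)
    · change Commute (cj a21 ((b21 * a21) ^ k)) (cj a12 ((b12 * a12) ^ k))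
      rw [← (cj_zpow hq hs k).1, ← (cj_zpow hp hr k).1]
      exact commute_cj hpq.symm _
    · change Commute (cj b21 ((b21 * a21) ^ k)) (cj b12 ((b12 * a12) ^ k))
      rw [← (cj_zpow hq hs k).2, ← (cj_zpow hp hr k).2]
      exact commute_cj hrs.symm _
  have hf : ∀ a, PresentedGroup.toGroup hv (PresentedGroup.of a) = v a :=
    fun a => PresentedGroup.toGroup.of hv
  refine ⟨PresentedGroup.toGroup hv, hf _, hf _, hf _, hf _, ?_, ?_⟩
  · obtain ⟨g, h12, h21, k12, k21⟩ := exists_retraction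
    have hgf : g.comp (PresentedGroup.toGroup hv) = SemidirectProduct.inl := by
      refine PresentedGroup.ext fun a => ?_
      rw [MonoidHom.comp_apply, hf]
      cases a <;> assumption
    have hinj : Function.Injective (g ∘ PresentedGroup.toGroup hv) := by
      rw [← MonoidHom.coe_comp, hgf]
      exact SemidirectProduct.inl_injective
    exact hinj.of_comp
  · rw [MonoidHom.range_eq_map, ← PresentedGroup.closure_range_of, MonoidHom.map_closure,
      ← Set.range_comp]
    congr 1
    ext w
    simp only [Set.mem_range, Function.comp_apply, hf, Set.mem_insert_iff, Set.mem_singleton_iff]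
    constructor
    · rintro ⟨a, rfl⟩
      cases a <;> simp [v]
    · rintro (rfl | rfl | rfl | rfl)
      exacts [⟨x21, rfl⟩, ⟨x12, rfl⟩, ⟨y21, rfl⟩, ⟨y12, rfl⟩]

end Paper
end
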